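/- arXiv:2503.17387 — 2 statements merged into one kernel-verified Lean document; each statement's English description precedes it below -/
import Mathlib

section
/- Every DG game that is both terminal and play-once has a Nash equilibrium (in pure stationary strategies). -/
open Classical

/-- A deterministic graphical (DG) game on vertex (position) set `V` with player set `ι`.
`adj` is the move relation of the digraph; terminals are exactly the vertices of
out-degree `0`.  `owner x` is the player controlling position `x` (irrelevant for
terminals), `init` is the initial position, and `pref i x y` means that player `i`
strictly prefers outcome `x` to outcome `y`, where outcomes are encoded as
`Option V`: `some t` for a terminal `t` and `none` for the infinite outcome `∞`. -/
structure DGGame (V : Type*) (ι : Type*) where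
  adj : V → V → Prop
  owner : V → ι
  init : V
  pref : ι → Option V → Option V → Prop

namespace DGGame

variable {V ι : Type*} (Γ : DGGame V ι)

/-- A terminal position: no outgoing moves. -/
def Terminal (x : V) : Prop := ∀ y, ¬ Γ.adj x y

/-- The set of outcomes `A = T ∪ {∞}`. -/
def OutcomeSet : Set (Option V) := {x | x = none ∨ ∃ t, Γ.Terminal t ∧ x = some t}

/-- The preferences of each player form a strict linear order on the outcome set. -/
def PrefOrder : Prop :=
  ∀ i : ι,
    (∀ x ∈ Γ.OutcomeSet, ¬ Γ.pref i x x) ∧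
    (∀ x ∈ Γ.OutcomeSet, ∀ y ∈ Γ.OutcomeSet, ∀ z ∈ Γ.OutcomeSet,
        Γ.pref i x y → Γ.pref i y z → Γ.pref i x z) ∧
    (∀ x ∈ Γ.OutcomeSet, ∀ y ∈ Γ.OutcomeSet, x ≠ y → Γ.pref i x y ∨ Γ.pref i y x)

/-- One step of the play determined by a situation `σ` (stays put at terminals). -/
noncomputable def step (σ : V → V) (x : V) : V :=
  if Γ.Terminal x then x else σ x

/-- The position reached after `n` moves of the play starting at the initial position. -/
noncomputable def iter (σ : V → V) (n : ℕ) : V := (Γ.step σ)^[n] Γ.init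

/-- The outcome `g(σ)` of a situation: the terminal at which the play from the initial
position ends, or `none` (i.e. `∞`) if the play is infinite. -/
noncomputable def outcome (σ : V → V) : Option V :=
  if h : ∃ n, Γ.Terminal (Γ.iter σ n) then some (Γ.iter σ (Nat.find h)) else none

/-- A situation: a choice, for every non-terminal position, of a move from it.
(Values at terminal positions are irrelevant.) -/
def IsSituation (σ : V → V) : Prop := ∀ x, ¬ Γ.Terminal x → Γ.adj x (σ x)

/-- Nash equilibrium in pure stationary strategies: no player `i` can obtain a strictly
better outcome by changing his own moves only. -/
def IsNE (σ : V → V) : Prop :=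
  Γ.IsSituation σ ∧
  ∀ (i : ι) (σ' : V → V), Γ.IsSituation σ' →
    (∀ x, Γ.owner x ≠ i → σ' x = σ x) →
    ¬ Γ.pref i (Γ.outcome σ') (Γ.outcome σ)

/-- A terminal Nash equilibrium: a NE whose outcome is a terminal. -/
def IsTerminalNE (σ : V → V) : Prop := Γ.IsNE σ ∧ ∃ t, Γ.outcome σ = some t

/-- A non-terminal Nash equilibrium: a NE whose outcome is `∞`. -/
def IsNonterminalNE (σ : V → V) : Prop := Γ.IsNE σ ∧ Γ.outcome σ = none

/-- A terminal DG game: every player prefers every terminal outcome to `∞`. -/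
def TerminalGame : Prop := ∀ (i : ι) (t : V), Γ.Terminal t → Γ.pref i (some t) none

/-- A play-once DG game: every player controls exactly one position. -/
def PlayOnce : Prop := ∀ i : ι, {x | ¬ Γ.Terminal x ∧ Γ.owner x = i}.ncard = 1

/-- Reachability by a directed path. -/
def Reaches (x y : V) : Prop := Relation.ReflTransGen Γ.adj x y

end DGGame

/-!
Since every player moves at one position only, a deviation can matter only at a position `u` on the
play; it replaces the move at `u` by some `u → w`, and it reaches a terminal only if the play then
follows `σ` from `w` without meeting `u` again. This test makes sense for any set `E` of moves of
the game, where a play that gets stuck at a nonterminal position counts as `∞`. By induction on `E`,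
if some terminal can be reached from `x` by moves of `E`, there is a stable situation for the start
`x` whose play ends at a terminal.

Induction step: remove the moves of `x` from `E`. Each child `j` of `x` from which a terminal is
still reachable has a stable situation `σ_j`, ending at a terminal `a_j`. A greedy selection gives a
child `i` such that every such child reaches a target, meaning a terminal `b` that is not better
than `a_i` for the owner of `x` and that is either `a_i` or unreachable from `i`. Let `x` move to
`i`, keep `σ_i` on its play from `i`, let every other position from which a target is reachable move
along a shortest path, and keep `σ_i` elsewhere. The owner of `x` gains nothing, because all his
children lead to targets or to `∞`. A deviation at a position of the play from `i` either leads to a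
target reachable from `i`, that is to `a_i`, or never meets a redirected position, so that the
stability of `σ_i` applies.
-/

open Relation

namespace DGGame

section Relation

variable {α : Type*} {r : α → α → Prop} {σ τ : α → α} {B : Set α} {x y u i a b : α}

/-- The relation `r` without the steps that start at `x`: the moves left in a game after the moves
of the position `x` are removed. A path may still end at `x`. -/
def Avoiding (r : α → α → Prop) (x p q : α) : Prop := p ≠ x ∧ r p q

/-- The steps of `r` that follow the choices of `σ`. The play of `σ` from `y` visits the positions
`p` with `ReflTransGen (PlayStep r σ) y p`. -/
def PlayStep (r : α → α → Prop) (σ : α → α) (p q : α) : Prop := r p q ∧ σ p = q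

/-- `σ` chooses a step of `r` wherever there is one: a situation of the game with moves `r`. -/
def IsSelector (r : α → α → Prop) (σ : α → α) : Prop := ∀ ⦃p q⦄, r p q → r p (σ p)

lemma avoiding_le : Avoiding r x ≤ r := fun _ _ h => h.2

lemma playStep_le : PlayStep r σ ≤ r := fun _ _ h => h.1

lemma avoiding_lt (h : r x y) : Avoiding r x < r :=
  lt_of_le_not_ge avoiding_le fun hle => (hle _ _ h).1 rfl

lemma playStep_avoiding : PlayStep (Avoiding r x) σ = Avoiding (PlayStep r σ) x := by
  funext p q
  exact propext and_assoc

lemma playStep_avoiding_le : PlayStep (Avoiding r x) σ ≤ PlayStep r σ :=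
  fun _ _ h => ⟨h.1.2, h.2⟩

lemma playStep_congr (h : ∀ p q, r p q → σ p = τ p) : PlayStep r σ = PlayStep r τ := by
  funext p q
  exact propext (and_congr_right fun hpq => by rw [h p q hpq])

lemma rightUnique_playStep : Relator.RightUnique (PlayStep r σ) :=
  fun _ _ _ h h' => h.2.symm.trans h'.2

lemma exists_isSelector (r : α → α → Prop) : ∃ σ, IsSelector r σ := by
  have hchoice : ∀ p, ∃ z, ∀ q, r p q → r p z := fun p => by
    by_cases h : ∃ z, r p z
    · exact h.imp fun z hz _ _ => hz
    · exact ⟨p, fun q hq => absurd ⟨q, hq⟩ h⟩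
  choose σ hσ using hchoice
  exact ⟨σ, hσ⟩

lemma reflTransGen_avoiding_self_iff : ReflTransGen (Avoiding r x) x y ↔ y = x :=
  reflTransGen_iff_eq fun _ h => h.1 rfl

lemma reflTransGen_avoiding_or (x : α) (h : ReflTransGen r y a) :
    ReflTransGen (Avoiding r x) y a ∨
      ReflTransGen r y x ∧ ∃ w, r x w ∧ ReflTransGen (Avoiding r x) w a := by
  induction h using ReflTransGen.head_induction_on with
  | refl => exact .inl .refl
  | @head p q hpq _ ih =>
    rcases ih with h | ⟨hqx, hx⟩
    · by_cases hp : p = x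
      · exact .inr ⟨hp ▸ .refl, q, hp ▸ hpq, h⟩
      · exact .inl (h.head ⟨hp, hpq⟩)
    · exact .inr ⟨hqx.head hpq, hx⟩

lemma eq_of_reflTransGen_avoiding (hr : Relator.RightUnique r) (hu : ReflTransGen r y u)
    (hb : ReflTransGen (Avoiding r u) y b) (hsink : ∀ q, ¬ r b q) : b = u := by
  induction hu using ReflTransGen.head_induction_on with
  | refl => exact reflTransGen_avoiding_self_iff.1 hb
  | head hpq _ ih =>
    rcases hb.cases_head with rfl | ⟨c, hc, hcb⟩
    · exact absurd hpq (hsink _)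
    · exact ih (hr hpq hc.2 ▸ hcb)

lemma reflTransGen_sink_of_reflTransGen (hr : Relator.RightUnique r) (ha : ReflTransGen r y a)
    (hsink : ∀ q, ¬ r a q) (hu : ReflTransGen r y u) : ReflTransGen r u a := by
  refine (ReflTransGen.total_of_right_unique hr ha hu).elim (fun h => ?_) id
  rw [(reflTransGen_iff_eq hsink).1 h]

lemma sink_unique (hr : Relator.RightUnique r) (ha : ReflTransGen r y a) (hsa : ∀ q, ¬ r a q)
    (hb : ReflTransGen r y b) (hsb : ∀ q, ¬ r b q) : a = b :=
  (reflTransGen_iff_eq hsb).1 (reflTransGen_sink_of_reflTransGen hr ha hsa hb)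

lemma reflTransGen_playStep_congr
    (h : ∀ p, ReflTransGen (PlayStep r τ) i p → σ p = τ p) :
    ReflTransGen (PlayStep r σ) i y ↔ ReflTransGen (PlayStep r τ) i y := by
  constructor <;> intro hy
  · induction hy with
    | refl => exact .refl
    | tail _ hpq ih => exact ih.tail ⟨hpq.1, (h _ ih).symm.trans hpq.2⟩
  · induction hy with
    | refl => exact .refl
    | tail hp hpq ih => exact ih.tail ⟨hpq.1, (h _ hp).trans hpq.2⟩

/-! ### Redirecting a situation towards a set of targets -/

/-- The points from which some walk of exactly `n` steps of `r` ends in `B`. -/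
def StepsTo (r : α → α → Prop) (B : Set α) : ℕ → Set α
  | 0 => B
  | n + 1 => {y | ∃ z ∈ StepsTo r B n, r y z}

lemma exists_mem_stepsTo (hb : b ∈ B) (h : ReflTransGen r y b) : ∃ n, y ∈ StepsTo r B n := by
  induction h using ReflTransGen.head_induction_on with
  | refl => exact ⟨0, hb⟩
  | head hpq _ ih =>
    obtain ⟨n, hn⟩ := ih
    exact ⟨n + 1, _, hn, hpq⟩

lemma exists_step_closer (r : α → α → Prop) (B : Set α) :
    ∃ f : α → α, ∀ n, ∀ y ∈ StepsTo r B n, y ∉ B → r y (f y) ∧ ∃ m < n, f y ∈ StepsTo r B m := by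
  have hchoice : ∀ y, ∃ z, ∀ n, y ∈ StepsTo r B n → y ∉ B →
      r y z ∧ ∃ m < n, z ∈ StepsTo r B m := fun y => by
    by_cases hy : ∃ n, y ∈ StepsTo r B n
    · obtain ⟨n, hn, hmin⟩ : ∃ n, y ∈ StepsTo r B n ∧ ∀ m, y ∈ StepsTo r B m → n ≤ m :=
        ⟨Nat.find hy, Nat.find_spec hy, fun _ => Nat.find_min' hy⟩
      cases n with
      | zero => exact ⟨y, fun _ _ hyB => absurd hn hyB⟩
      | succ n =>
        obtain ⟨z, hz, hyz⟩ := hn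
        exact ⟨z, fun m hm _ => ⟨hyz, n, hmin m hm, hz⟩⟩
    · exact ⟨y, fun n hn => absurd ⟨n, hn⟩ hy⟩
  choose f hf using hchoice
  exact ⟨f, fun n y => hf y n⟩

lemma exists_forall_play_reaches (r : α → α → Prop) (B : Set α) :
    ∃ f : α → α, ∀ y, (∃ b ∈ B, ReflTransGen r y b) →
      ∃ b ∈ B, ReflTransGen (PlayStep (fun p q => p ∉ B ∧ r p q) f) y b := by
  obtain ⟨f, hf⟩ := exists_step_closer r B
  have hplay : ∀ n, ∀ y ∈ StepsTo r B n,
      ∃ b ∈ B, ReflTransGen (PlayStep (fun p q => p ∉ B ∧ r p q) f) y b := fun n => by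
    induction n using Nat.strong_induction_on with
    | _ n ih =>
      intro y hn
      by_cases hy : y ∈ B
      · exact ⟨y, hy, .refl⟩
      · obtain ⟨hstep, m, hmn, hm⟩ := hf n y hn hy
        obtain ⟨b, hb, hfy⟩ := ih m hmn (f y) hm
        exact ⟨b, hb, hfy.head ⟨⟨hy, hstep⟩, rfl⟩⟩
  refine ⟨f, fun y ⟨b, hb, hyb⟩ => ?_⟩
  obtain ⟨n, hn⟩ := exists_mem_stepsTo hb hyb
  exact hplay n y hn

lemma exists_isSelector_reaches (hτ : IsSelector r τ) (B : Set α) :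
    ∃ σ, IsSelector r σ ∧ (∀ p, (p ∈ B ∨ ¬ ∃ b ∈ B, ReflTransGen r p b) → σ p = τ p) ∧
      ∀ p, (∃ b ∈ B, ReflTransGen r p b) → ∃ b ∈ B, ReflTransGen (PlayStep r σ) p b := by
  obtain ⟨f, hf⟩ := exists_forall_play_reaches r B
  let σ : α → α := fun p => if p ∉ B ∧ ∃ b ∈ B, ReflTransGen r p b then f p else τ p
  have hfσ : ∀ p, ∀ b ∈ B, ReflTransGen (PlayStep (fun p q => p ∉ B ∧ r p q) f) p b →
      ReflTransGen (PlayStep r σ) p b := fun p b hb hpb => by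
    induction hpb using ReflTransGen.head_induction_on with
    | refl => exact .refl
    | @head p q hstep hrest ih =>
      have hreach : ReflTransGen r p b :=
        ReflTransGen.mono (fun _ _ h => h.1.2) _ _ (hrest.head hstep)
      exact ih.head ⟨hstep.1.2, (if_pos ⟨hstep.1.1, b, hb, hreach⟩).trans hstep.2⟩
  refine ⟨σ, fun p q hpq => ?_, fun p hp => if_neg fun h => hp.elim h.1 fun hp => hp h.2,
    fun p hp => ?_⟩
  · by_cases h : p ∉ B ∧ ∃ b ∈ B, ReflTransGen r p b
    · obtain ⟨b, hb, hpb⟩ := hf p h.2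
      rcases hpb.cases_head with rfl | ⟨c, ⟨⟨-, hpc⟩, rfl⟩, -⟩
      · exact absurd hb h.1
      · rwa [show σ p = f p from if_pos h]
    · rw [show σ p = τ p from if_neg h]
      exact hτ hpq
  · obtain ⟨b, hb, hpb⟩ := hf p hp
    exact ⟨b, hb, hfσ p b hb hpb⟩

/-- `σ` redirects the play of `τ` towards `B`: it keeps the choices of `τ` along the play of `τ`
from `i` and at all points from which `B` cannot be reached, and the play of `σ` reaches `B` from
all other points. -/
structure Redirects (r : α → α → Prop) (τ : α → α) (i : α) (B : Set α) (σ : α → α) : Prop where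
  selector : IsSelector r σ
  eq_of_visited : ∀ p, ReflTransGen (PlayStep r τ) i p → σ p = τ p
  eq_of_not_reaches : ∀ p, (¬ ∃ b ∈ B, ReflTransGen r p b) → σ p = τ p
  reaches : ∀ p, (∃ b ∈ B, ReflTransGen r p b) → ∃ b ∈ B, ReflTransGen (PlayStep r σ) p b

lemma exists_redirects (hτ : IsSelector r τ) (hia : ReflTransGen (PlayStep r τ) i a)
    (hsink : ∀ q, ¬ r a q) (haB : a ∈ B) : ∃ σ, Redirects r τ i B σ := by
  -- New paths are followed only until they meet `B` or the play of `τ` from `i`.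
  let D : Set α := B ∪ {p | ReflTransGen (PlayStep r τ) i p}
  obtain ⟨σ, hselector, heq, hreaches⟩ := exists_isSelector_reaches hτ D
  have hvisited : ∀ p, ReflTransGen (PlayStep r τ) i p → σ p = τ p :=
    fun p hp => heq p (.inl (.inr hp))
  have hDB : ∀ d ∈ D, ∃ b ∈ B, ReflTransGen (PlayStep r σ) d b := by
    rintro d (hd | hd)
    · exact ⟨d, hd, .refl⟩
    · have hda := reflTransGen_sink_of_reflTransGen rightUnique_playStep hia
        (fun q h => hsink q h.1) hd
      exact ⟨a, haB, (reflTransGen_playStep_congr fun p hp => hvisited p (hd.trans hp)).2 hda⟩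
  refine ⟨σ, hselector, hvisited, fun p hp => heq p (.inr ?_), fun p ⟨b, hb, hpb⟩ => ?_⟩
  · rintro ⟨d, hd, hpd⟩
    obtain ⟨b, hb, hdb⟩ := hDB d hd
    exact hp ⟨b, hb, hpd.trans (ReflTransGen.mono playStep_le _ _ hdb)⟩
  · obtain ⟨d, hd, hpd⟩ := hreaches p ⟨b, .inl hb, hpb⟩
    obtain ⟨c, hc, hdc⟩ := hDB d hd
    exact ⟨c, hc, hpd.trans hdc⟩

end Relation

/-- The worst index `l` in `J` can be chosen as `i` if every `j ∈ J` is related to `l`; otherwise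
`i` is chosen among the indices that are not. -/
lemma exists_selection {κ : Type*} [Finite κ] {S lt : κ → κ → Prop} (hS : ∀ j, S j j)
    (hlt : WellFounded lt) {J : Set κ} (hJ : J.Nonempty) :
    ∃ i ∈ J, ∀ j ∈ J, ∃ l ∈ J, S j l ∧ ¬ lt i l ∧ (S i l → l = i) := by
  induction J using WellFoundedLT.induction with
  | _ J ih =>
    obtain ⟨l, hl, hmin⟩ := hlt.has_min J hJ
    let K : Set κ := {j ∈ J | ¬ S j l}
    have hKJ : K < J := ⟨fun j hj => hj.1, fun h => (h hl).2 (hS l)⟩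
    by_cases hK : K.Nonempty
    · obtain ⟨i, hi, hsel⟩ := ih K hKJ hK
      refine ⟨i, hi.1, fun j hj => ?_⟩
      by_cases hjl : S j l
      · exact ⟨l, hl, hjl, hmin i hi.1, fun h => absurd h hi.2⟩
      · obtain ⟨k, hk, h⟩ := hsel j ⟨hj, hjl⟩
        exact ⟨k, hk.1, h⟩
    · refine ⟨l, hl, fun j hj => ⟨l, hl, ?_, hmin l hl, fun _ => rfl⟩⟩
      by_contra h
      exact hK ⟨j, hj, h⟩

/-! ### Stable situations -/

variable {V ι : Type*} {Γ : DGGame V ι} {E : V → V → Prop} {σ τ : V → V} {x i a b : V}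

variable (Γ) in
/-- The equilibrium condition of a terminal play-once game for the moves `E` and the start `x`: the
play of `σ` ends at the terminal `a`, and no owner of a visited position `u` gains by changing the
move at `u`. A deviating play that returns to `u` is infinite, hence the play after the deviation is
taken in `Avoiding E u`. -/
structure Stable (E : V → V → Prop) (x : V) (σ : V → V) (a : V) : Prop where
  selector : IsSelector E σ
  terminal : Γ.Terminal a
  play : ReflTransGen (PlayStep E σ) x a
  no_gain : ∀ u, ReflTransGen (PlayStep E σ) x u → ∀ w, E u w → ∀ b, Γ.Terminal b →
    ReflTransGen (PlayStep (Avoiding E u) σ) w b → ¬ Γ.pref (Γ.owner u) (some b) (some a)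

variable (Γ) in
/-- The terminals towards which positions are redirected when `x` moves to `i` and play ends at `a`:
those not better than `a` for the owner of `x` and, unless equal to `a`, not reachable from `i`
without a move of `x`. -/
def targets (E : V → V → Prop) (x i a : V) : Set V :=
  {b | Γ.Terminal b ∧ ¬ Γ.pref (Γ.owner x) (some b) (some a) ∧
    (ReflTransGen (Avoiding E x) i b → b = a)}

lemma Terminal.not_step (hb : Γ.Terminal b) (hE : E ≤ Γ.adj) (q : V) : ¬ E b q :=
  fun h => hb q (hE _ _ h)

lemma Terminal.mem_outcomeSet (hb : Γ.Terminal b) : some b ∈ Γ.OutcomeSet := .inr ⟨b, hb, rfl⟩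

lemma not_pref_of_pref {k : ι} {o o' : Option V}
    (hpref : Γ.OutcomeSet.WellFoundedOn (Function.swap (Γ.pref k))) (ho : o ∈ Γ.OutcomeSet)
    (ho' : o' ∈ Γ.OutcomeSet) (h : Γ.pref k o o') : ¬ Γ.pref k o' o :=
  WellFounded.asymmetric hpref ⟨o', ho'⟩ ⟨o, ho⟩ h

lemma not_pref_self {k : ι} {o : Option V}
    (hpref : Γ.OutcomeSet.WellFoundedOn (Function.swap (Γ.pref k))) (ho : o ∈ Γ.OutcomeSet) :
    ¬ Γ.pref k o o :=
  fun h => not_pref_of_pref hpref ho ho h h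

lemma eq_of_play (hE : E ≤ Γ.adj) (ha : Γ.Terminal a) (hb : Γ.Terminal b)
    (hxa : ReflTransGen (PlayStep E σ) x a) (hxb : ReflTransGen (PlayStep E σ) x b) : a = b :=
  sink_unique rightUnique_playStep hxa (ha.not_step (playStep_le.trans hE)) hxb
    (hb.not_step (playStep_le.trans hE))

lemma exists_stable_of_terminal (hE : E ≤ Γ.adj) (hx : Γ.Terminal x) :
    ∃ σ a, Γ.Stable E x σ a := by
  obtain ⟨σ, hσ⟩ := exists_isSelector E
  refine ⟨σ, x, hσ, hx, .refl, fun u hu w huw => ?_⟩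
  rw [(reflTransGen_iff_eq (hx.not_step (playStep_le.trans hE))).1 hu] at huw
  exact absurd huw (hx.not_step hE w)

lemma Redirects.apply_removed {B : Set V} (hσ : Redirects (Avoiding E x) τ i B σ) (hx : x ∉ B) :
    σ x = τ x := by
  refine hσ.eq_of_not_reaches x ?_
  rintro ⟨b, hb, hxb⟩
  exact hx (reflTransGen_avoiding_self_iff.1 hxb ▸ hb)

lemma Stable.ne_of_visited (hE : E ≤ Γ.adj) (hx : ¬ Γ.Terminal x)
    (hτ : Γ.Stable (Avoiding E x) i τ a) {p : V}
    (hp : ReflTransGen (PlayStep (Avoiding E x) τ) i p) : p ≠ x := by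
  rintro rfl
  have hpa := reflTransGen_sink_of_reflTransGen rightUnique_playStep hτ.play
    (hτ.terminal.not_step (playStep_le.trans (avoiding_le.trans hE))) hp
  have hap : a = p := reflTransGen_avoiding_self_iff.1 (ReflTransGen.mono playStep_le _ _ hpa)
  exact hx (hap ▸ hτ.terminal)

lemma Stable.visited_iff {B : Set V} (hE : E ≤ Γ.adj) (hx : ¬ Γ.Terminal x)
    (hτ : Γ.Stable (Avoiding E x) i τ a) (hσ : Redirects (Avoiding E x) τ i B σ) {p : V} :
    ReflTransGen (PlayStep E σ) i p ↔ ReflTransGen (PlayStep (Avoiding E x) τ) i p := by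
  have hiff := fun {p} => reflTransGen_playStep_congr (y := p) hσ.eq_of_visited
  refine ⟨fun hp => ?_, fun hp => ?_⟩
  · induction hp with
    | refl => exact .refl
    | tail _ hpq ih =>
      exact ih.tail ⟨⟨hτ.ne_of_visited hE hx ih, hpq.1⟩,
        (hσ.eq_of_visited _ ih).symm.trans hpq.2⟩
  · exact ReflTransGen.mono playStep_avoiding_le _ _ (hiff.2 hp)

lemma not_pref_of_deviation_at_start (hE : E ≤ Γ.adj)
    (htargets : ∀ j t, E x j → Γ.Terminal t → ReflTransGen (Avoiding E x) j t →
      ∃ b ∈ Γ.targets E x i a, ReflTransGen (Avoiding E x) j b)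
    (hσ : Redirects (Avoiding E x) τ i (Γ.targets E x i a) σ) {w : V} (hxw : E x w)
    (hb : Γ.Terminal b) (hwb : ReflTransGen (PlayStep (Avoiding E x) σ) w b) :
    ¬ Γ.pref (Γ.owner x) (some b) (some a) := by
  have hreach := htargets w b hxw hb (ReflTransGen.mono playStep_le _ _ hwb)
  obtain ⟨c, hc, hwc⟩ := hσ.reaches w hreach
  rw [eq_of_play (avoiding_le.trans hE) hb hc.1 hwb hwc]
  exact hc.2.1

lemma Redirects.play_of_not_reaches {B : Set V} {w : V}
    (hσ : Redirects (Avoiding E x) τ i B σ) {u : V}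
    (hx : ¬ ReflTransGen (PlayStep (Avoiding E u) σ) x b)
    (hw : ¬ ∃ c ∈ B, ReflTransGen (Avoiding E x) w c)
    (hwb : ReflTransGen (PlayStep (Avoiding E u) σ) w b) :
    ReflTransGen (PlayStep (Avoiding (Avoiding E x) u) τ) w b := by
  induction hwb using ReflTransGen.head_induction_on with
  | refl => exact .refl
  | @head p q hpq hqb ih =>
    have hpx : p ≠ x := by
      rintro rfl
      exact hx (hqb.head hpq)
    have hq : ¬ ∃ c ∈ B, ReflTransGen (Avoiding E x) q c :=
      fun ⟨c, hc, hqc⟩ => hw ⟨c, hc, hqc.head ⟨hpx, hpq.1.2⟩⟩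
    exact (ih hq).head
      ⟨⟨hpq.1.1, hpx, hpq.1.2⟩, (hσ.eq_of_not_reaches p hw).symm.trans hpq.2⟩

lemma not_pref_of_deviation_on_play (hE : E ≤ Γ.adj) (hirr : ∀ k, ¬ Γ.pref k (some a) (some a))
    (hxi : E x i) (hσx : σ x = i) (hτ : Γ.Stable (Avoiding E x) i τ a)
    (hσ : Redirects (Avoiding E x) τ i (Γ.targets E x i a) σ) {u w : V}
    (hiu : ReflTransGen (PlayStep E σ) i u) (huw : E u w) (hb : Γ.Terminal b)
    (hwb : ReflTransGen (PlayStep (Avoiding E u) σ) w b) :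
    ¬ Γ.pref (Γ.owner u) (some b) (some a) := by
  have hx : ¬ Γ.Terminal x := fun h => h.not_step hE i hxi
  have hu := (hτ.visited_iff hE hx hσ).1 hiu
  have huw' : Avoiding E x u w := ⟨hτ.ne_of_visited hE hx hu, huw⟩
  by_cases hw : ∃ c ∈ Γ.targets E x i a, ReflTransGen (Avoiding E x) w c
  · obtain ⟨c, hc, hwc⟩ := hσ.reaches w hw
    have hbc : b = c := eq_of_play hE hb hc.1
      (ReflTransGen.mono playStep_avoiding_le _ _ hwb)
      (ReflTransGen.mono playStep_avoiding_le _ _ hwc)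
    have hic : ReflTransGen (Avoiding E x) i c :=
      (ReflTransGen.mono playStep_le _ _ hu).trans
        ((ReflTransGen.mono playStep_le _ _ hwc).head huw')
    rw [hbc, hc.2.2 hic]
    exact hirr _
  · have hxb : ¬ ReflTransGen (PlayStep (Avoiding E u) σ) x b := fun hxb => by
      rw [playStep_avoiding] at hxb
      have hbu := eq_of_reflTransGen_avoiding rightUnique_playStep (hiu.head ⟨hxi, hσx⟩) hxb
        (hb.not_step (playStep_le.trans hE))
      exact hb.not_step hE w (hbu ▸ huw)
    exact hτ.no_gain u hu w huw' b hb (hσ.play_of_not_reaches hxb hw hwb)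

lemma Stable.update (hτ : Γ.Stable (Avoiding E x) i τ a) (y : V) :
    Γ.Stable (Avoiding E x) i (Function.update τ x y) a := by
  have hplay : ∀ u, PlayStep (Avoiding (Avoiding E x) u) (Function.update τ x y) =
      PlayStep (Avoiding (Avoiding E x) u) τ :=
    fun u => playStep_congr fun p _ h => Function.update_of_ne h.2.1 ..
  have hplay' : PlayStep (Avoiding E x) (Function.update τ x y) = PlayStep (Avoiding E x) τ :=
    playStep_congr fun p _ h => Function.update_of_ne h.1 ..
  refine ⟨fun p q hpq => ?_, hτ.terminal, hplay' ▸ hτ.play, ?_⟩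
  · rw [Function.update_of_ne hpq.1]
    exact hτ.selector hpq
  · simpa only [hplay, hplay'] using hτ.no_gain

lemma exists_stable_of_child (hE : E ≤ Γ.adj) (hirr : ∀ k, ¬ Γ.pref k (some a) (some a))
    (hxi : E x i) (hτ : Γ.Stable (Avoiding E x) i τ a)
    (htargets : ∀ j t, E x j → Γ.Terminal t → ReflTransGen (Avoiding E x) j t →
      ∃ b ∈ Γ.targets E x i a, ReflTransGen (Avoiding E x) j b) :
    ∃ σ, Γ.Stable E x σ a := by
  have hx : ¬ Γ.Terminal x := fun h => h.not_step hE i hxi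
  have hτ' := hτ.update i
  obtain ⟨σ, hσ⟩ := exists_redirects (B := Γ.targets E x i a) hτ'.selector hτ'.play
    (hτ.terminal.not_step (avoiding_le.trans hE)) ⟨hτ.terminal, hirr _, fun _ => rfl⟩
  have hσx : σ x = i :=
    (hσ.apply_removed fun h => hx h.1).trans (Function.update_self ..)
  refine ⟨σ, fun p q hpq => ?_, hτ.terminal,
    ((hτ'.visited_iff hE hx hσ).2 hτ'.play).head ⟨hxi, hσx⟩, fun u hu w huw b hb hwb => ?_⟩
  · by_cases hp : p = x
    · rwa [hp, hσx]
    · exact (hσ.selector ⟨hp, hpq⟩).2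
  · rcases hu.cases_head with rfl | ⟨c, ⟨-, hc⟩, hcu⟩
    · exact not_pref_of_deviation_at_start hE htargets hσ huw hb hwb
    · have hiu : ReflTransGen (PlayStep E σ) i u := hσx ▸ hc ▸ hcu
      exact not_pref_of_deviation_on_play hE hirr hxi hσx hτ' hσ hiu huw hb hwb

theorem exists_stable [Finite V]
    (hpref : ∀ k, Γ.OutcomeSet.WellFoundedOn (Function.swap (Γ.pref k))) (hE : E ≤ Γ.adj) {t : V}
    (ht : Γ.Terminal t) (hxt : ReflTransGen E x t) : ∃ σ a, Γ.Stable E x σ a := by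
  induction E using WellFoundedLT.induction generalizing x t with
  | _ E ih =>
    by_cases hx : Γ.Terminal x
    · exact exists_stable_of_terminal hE hx
    let I := {j : V // E x j ∧ ∃ t, Γ.Terminal t ∧ ReflTransGen (Avoiding E x) j t}
    have hstable : ∀ j : I, ∃ σ a, Γ.Stable (Avoiding E x) j σ a := fun ⟨j, hxj, s, hs, hjs⟩ =>
      ih _ (avoiding_lt hxj) (avoiding_le.trans hE) hs hjs
    choose σ a hσ using hstable
    have hI : (Set.univ : Set I).Nonempty := by
      have hne : x ≠ t := fun h => hx (h ▸ ht)
      obtain ⟨-, j, hxj, hjt⟩ := (reflTransGen_avoiding_or x hxt).resolve_left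
        fun h => hne (reflTransGen_avoiding_self_iff.1 h).symm
      exact ⟨⟨j, hxj, t, ht, hjt⟩, trivial⟩
    have hworse : WellFounded fun j k : I => Γ.pref (Γ.owner x) (some (a k)) (some (a j)) :=
      Set.wellFoundedOn_range.1 ((hpref (Γ.owner x)).subset
        (Set.range_subset_iff.2 fun j => (hσ j).terminal.mem_outcomeSet))
    obtain ⟨i, -, hi⟩ := exists_selection
      (S := fun j k : I => ReflTransGen (Avoiding E x) j (a k))
      (fun j => ReflTransGen.mono playStep_le _ _ (hσ j).play) hworse hI
    have hirr : ∀ k, ¬ Γ.pref k (some (a i)) (some (a i)) :=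
      fun k => not_pref_self (hpref k) (hσ i).terminal.mem_outcomeSet
    obtain ⟨ρ, hρ⟩ := exists_stable_of_child hE hirr i.2.1 (hσ i) fun j s hxj hs hjs => by
      obtain ⟨l, -, hjl, hworse, hil⟩ := hi ⟨j, hxj, s, hs, hjs⟩ trivial
      exact ⟨a l, ⟨(hσ l).terminal, hworse, fun h => congrArg a (hil h)⟩, hjl⟩
    exact ⟨ρ, a i, hρ⟩

/-! ### Nash equilibria -/

lemma isSelector_adj : IsSelector Γ.adj σ ↔ Γ.IsSituation σ :=
  ⟨fun hσ _ hx => (_root_.not_forall_not.1 hx).elim fun _ hxy => hσ hxy,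
    fun hσ x y hxy => hσ x fun hx => hx y hxy⟩

lemma play_iterate_step (hσ : Γ.IsSituation σ) (x : V) (n : ℕ) :
    ReflTransGen (PlayStep Γ.adj σ) x ((Γ.step σ)^[n] x) := by
  induction n with
  | zero => exact .refl
  | succ n ih =>
    rw [Function.iterate_succ_apply', step]
    split_ifs with h
    · exact ih
    · exact ih.tail ⟨hσ _ h, rfl⟩

lemma exists_iterate_step_eq (h : ReflTransGen (PlayStep Γ.adj σ) x a) :
    ∃ n, (Γ.step σ)^[n] x = a := by
  induction h with
  | refl => exact ⟨0, rfl⟩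
  | @tail p q _ hpq ih =>
    obtain ⟨n, rfl⟩ := ih
    exact ⟨n + 1, by rw [Function.iterate_succ_apply', step, if_neg fun h => h q hpq.1, hpq.2]⟩

lemma outcome_eq_some_iff (hσ : Γ.IsSituation σ) :
    Γ.outcome σ = some a ↔ Γ.Terminal a ∧ ReflTransGen (PlayStep Γ.adj σ) Γ.init a := by
  have hfind : ∀ h : ∃ n, Γ.Terminal (Γ.iter σ n), Γ.outcome σ = some (Γ.iter σ (Nat.find h)) :=
    fun h => dif_pos h
  refine ⟨fun h => ?_, fun ⟨ha, hplay⟩ => ?_⟩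
  · by_cases hex : ∃ n, Γ.Terminal (Γ.iter σ n)
    · obtain rfl := Option.some.inj ((hfind hex).symm.trans h)
      exact ⟨Nat.find_spec hex, play_iterate_step hσ _ _⟩
    · simp [outcome, hex] at h
  · obtain ⟨n, hn⟩ := exists_iterate_step_eq hplay
    have hex : ∃ n, Γ.Terminal (Γ.iter σ n) := ⟨n, by rwa [iter, hn]⟩
    rw [hfind hex, eq_of_play le_rfl (Nat.find_spec hex) ha (play_iterate_step hσ _ _) hplay]

lemma exists_isNE_of_not_reaches (hirr : ∀ k, ¬ Γ.pref k none none)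
    (h : ∀ t, Γ.Terminal t → ¬ Γ.Reaches Γ.init t) : ∃ σ, Γ.IsNE σ := by
  have hinf : ∀ σ, Γ.IsSituation σ → Γ.outcome σ = none := fun σ hσ =>
    Option.eq_none_iff_forall_ne_some.2 fun t ht => by
      obtain ⟨ht, hplay⟩ := (outcome_eq_some_iff hσ).1 ht
      exact h t ht (ReflTransGen.mono playStep_le _ _ hplay)
  obtain ⟨σ, hσ⟩ := exists_isSelector Γ.adj
  have hσ := isSelector_adj.1 hσ
  refine ⟨σ, hσ, fun k σ' hσ' _ => ?_⟩
  rw [hinf σ hσ, hinf σ' hσ']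
  exact hirr k

lemma Stable.not_pref_of_eq_off {σ' : V → V} {u : V} (hσ : Γ.Stable Γ.adj Γ.init σ a)
    (hirr : ¬ Γ.pref (Γ.owner u) (some a) (some a)) (hσ' : Γ.IsSituation σ')
    (heq : ∀ p, ¬ Γ.Terminal p → p ≠ u → σ' p = σ p) (hb : Γ.outcome σ' = some b) :
    ¬ Γ.pref (Γ.owner u) (some b) (some a) := by
  obtain ⟨hbt, hplay⟩ := (outcome_eq_some_iff hσ').1 hb
  have hoff : PlayStep (Avoiding Γ.adj u) σ' = PlayStep (Avoiding Γ.adj u) σ :=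
    playStep_congr fun p q hpq => heq p (fun h => h q hpq.2) hpq.1
  have hsame : ReflTransGen (PlayStep Γ.adj σ) Γ.init b → b = a :=
    fun h => eq_of_play le_rfl hbt hσ.terminal h hσ.play
  have hsame' : ReflTransGen (PlayStep Γ.adj σ') Γ.init a → b = a :=
    fun h => eq_of_play le_rfl hbt hσ.terminal hplay h
  rcases reflTransGen_avoiding_or u hσ.play with h | ⟨hu, -⟩
  · rw [← playStep_avoiding, ← hoff] at h
    rwa [hsame' (ReflTransGen.mono playStep_avoiding_le _ _ h)]
  · rcases reflTransGen_avoiding_or u hplay with h | ⟨-, w, ⟨huw, -⟩, h⟩ <;>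
      rw [← playStep_avoiding, hoff] at h
    · rwa [hsame (ReflTransGen.mono playStep_avoiding_le _ _ h)]
    · exact hσ.no_gain u hu w huw b hbt h

lemma Stable.isNE (hpref : ∀ k, Γ.OutcomeSet.WellFoundedOn (Function.swap (Γ.pref k)))
    (hterm : Γ.TerminalGame) (hpo : ∀ k, {u | ¬ Γ.Terminal u ∧ Γ.owner u = k}.Subsingleton)
    (hσ : Γ.Stable Γ.adj Γ.init σ a) : Γ.IsNE σ := by
  have hsit := isSelector_adj.1 hσ.selector
  have ha := hσ.terminal.mem_outcomeSet
  refine ⟨hsit, fun k σ' hσ' heq => ?_⟩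
  rw [(outcome_eq_some_iff hsit).2 ⟨hσ.terminal, hσ.play⟩]
  cases hb : Γ.outcome σ' with
  | none => exact not_pref_of_pref (hpref k) ha (.inl rfl) (hterm k a hσ.terminal)
  | some b =>
    by_cases hk : ∃ u, ¬ Γ.Terminal u ∧ Γ.owner u = k
    · obtain ⟨u, hu, rfl⟩ := hk
      exact hσ.not_pref_of_eq_off (not_pref_self (hpref _) ha) hσ'
        (fun p hp hpu => heq p fun h => hpu (hpo _ ⟨hp, h⟩ ⟨hu, rfl⟩)) hb
    · have hplay : PlayStep Γ.adj σ' = PlayStep Γ.adj σ :=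
        playStep_congr fun p q hpq => heq p fun h => hk ⟨p, fun hp => hp q hpq, h⟩
      obtain ⟨hbt, hinit⟩ := (outcome_eq_some_iff hσ').1 hb
      rw [eq_of_play le_rfl hbt hσ.terminal (hplay ▸ hinit) hσ.play]
      exact not_pref_self (hpref k) ha

lemma PrefOrder.wellFoundedOn [Finite V] (h : Γ.PrefOrder) (k : ι) :
    Γ.OutcomeSet.WellFoundedOn (Function.swap (Γ.pref k)) := by
  obtain ⟨hirr, htrans, -⟩ := h k
  let lt : Γ.OutcomeSet → Γ.OutcomeSet → Prop := fun o o' => Γ.pref k o' o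
  have : IsTrans Γ.OutcomeSet lt :=
    ⟨fun o₁ o₂ o₃ h₁₂ h₂₃ => htrans _ o₃.2 _ o₂.2 _ o₁.2 h₂₃ h₁₂⟩
  have : Std.Irrefl lt := ⟨fun o => hirr o o.2⟩
  exact Finite.wellFounded_of_trans_of_irrefl lt

lemma PlayOnce.subsingleton (h : Γ.PlayOnce) (k : ι) :
    {u | ¬ Γ.Terminal u ∧ Γ.owner u = k}.Subsingleton := by
  obtain ⟨u, hu⟩ := Set.ncard_eq_one.1 (h k)
  exact hu ▸ Set.subsingleton_singleton

end DGGame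

theorem stmt4_general {V ι : Type*} [Finite V] (Γ : DGGame V ι)
    (hpref : ∀ k, Γ.OutcomeSet.WellFoundedOn (Function.swap (Γ.pref k)))
    (hterm : Γ.TerminalGame) (hpo : ∀ k, {u | ¬ Γ.Terminal u ∧ Γ.owner u = k}.Subsingleton) :
    ∃ σ : V → V, Γ.IsNE σ := by
  by_cases h : ∃ t, Γ.Terminal t ∧ Γ.Reaches Γ.init t
  · obtain ⟨t, ht, hreach⟩ := h
    obtain ⟨σ, a, hσ⟩ := DGGame.exists_stable hpref le_rfl ht hreach
    exact ⟨σ, hσ.isNE hpref hterm hpo⟩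
  · exact DGGame.exists_isNE_of_not_reaches (fun k => DGGame.not_pref_self (hpref k) (.inl rfl))
      fun t ht hreach => h ⟨t, ht, hreach⟩

/-- Every DG game that is both terminal and play-once has a Nash equilibrium
(in pure stationary strategies). -/
theorem stmt4 {V ι : Type*} [Finite V] (Γ : DGGame V ι)
    (hinit : ¬ Γ.Terminal Γ.init) (hpref : Γ.PrefOrder)
    (hterm : Γ.TerminalGame) (hpo : Γ.PlayOnce) :
    ∃ σ : V → V, Γ.IsNE σ :=
  stmt4_general Γ hpref.wellFoundedOn hterm hpo.subsingleton
end

section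
/- Let Γ be a terminal DG game in which some terminal is reachable from the initial position v₀ by a directed path, and let Q ⊆ V be the set of positions from which no terminal can be reached by a directed path; assume Q ≠ ∅. Then v₀ ∉ Q, the induced subgame Γ[V∖Q] is again a terminal DG game (every non-terminal position of V∖Q retains at least one outgoing move inside V∖Q), and if Γ[V∖Q] has a terminal Nash equilibrium then Γ has a terminal Nash equilibrium. -/
/-!
A play that enters `Q` never leaves it, and `Q` contains no terminal, so such a play is infinite.
Hence a terminal equilibrium of `Γ[V∖Q]`, extended by arbitrary moves on `Q`, resists every
deviation: one whose play enters `Q` yields `∞`, the worst outcome for everybody, while one whose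
play avoids `Q` has the same play as a deviation already available in `Γ[V∖Q]`.
-/

open Classical

namespace DGGame

variable {V ι : Type*}

/-- The set `Q` of positions from which no terminal can be reached by a directed path. -/
def noTermReach (Γ : DGGame V ι) : Set V :=
  {x | ¬ ∃ t, Γ.Terminal t ∧ Γ.Reaches x t}

/-- The subgame `Γ[X]` induced by a set of positions `X` containing the initial
position: same controllers, same preferences, initial position `v₀`, and the
induced subgraph `G[X]`. -/
def restrict (Γ : DGGame V ι) (X : Set V) (h0 : Γ.init ∈ X) : DGGame X ι where
  adj a b := Γ.adj a.1 b.1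
  owner a := Γ.owner a.1
  init := ⟨Γ.init, h0⟩
  pref i a b := Γ.pref i (a.map Subtype.val) (b.map Subtype.val)

end DGGame

namespace DGGame

variable {V ι : Type*} {Γ : DGGame V ι} {X Q : Set V} {σ : V → V} {τ : X → X}

/-- A trap: a set of positions without terminals that no move leaves. -/
def IsTrap (Γ : DGGame V ι) (Q : Set V) : Prop :=
  ∀ x ∈ Q, ¬ Γ.Terminal x ∧ ∀ y, Γ.adj x y → y ∈ Q

/-- A viable set: every non-terminal position in it has a move that stays in it. For such a set `X`,
passing to the subgame `Γ[X]` creates no new terminals. -/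
def IsViable (Γ : DGGame V ι) (X : Set V) : Prop :=
  ∀ x ∈ X, ¬ Γ.Terminal x → ∃ y, Γ.adj x y ∧ y ∈ X

/-- The extension to all positions of a situation `τ` of a subgame `Γ[X]`, following `σ`
outside `X`. -/
noncomputable def extendOutside (τ : X → X) (σ : V → V) : V → V :=
  Function.extend (↑) (fun x => (τ x : V)) σ

/-- The situation of a subgame `Γ[X]` that follows `σ` where `σ` stays in `X`, and falls back on `τ`
where `σ` leaves `X`. -/
noncomputable def followWithin (σ : V → V) (τ : X → X) : X → X :=
  fun x => if h : σ x ∈ X then ⟨σ x, h⟩ else τ x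

theorem extendOutside_coe (τ : X → X) (σ : V → V) (x : X) : extendOutside τ σ x = τ x :=
  Subtype.val_injective.extend_apply _ _ x

theorem extendOutside_of_notMem {x : V} (τ : X → X) (σ : V → V) (hx : x ∉ X) :
    extendOutside τ σ x = σ x :=
  Function.extend_apply' _ _ _ fun ⟨a, ha⟩ => hx (ha ▸ a.2)

theorem coe_followWithin {x : X} (τ : X → X) (hx : σ x ∈ X) : (followWithin σ τ x : V) = σ x :=
  congrArg Subtype.val (dif_pos hx)

theorem followWithin_of_notMem {x : X} (τ : X → X) (hx : σ x ∉ X) : followWithin σ τ x = τ x :=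
  dif_neg hx

theorem exists_isSituation (Γ : DGGame V ι) : ∃ σ, Γ.IsSituation σ := by
  have hmove (x : V) : ∃ y, ¬ Γ.Terminal x → Γ.adj x y := by
    by_cases hx : Γ.Terminal x
    · exact ⟨x, fun hx' => absurd hx hx'⟩
    · obtain ⟨y, hxy⟩ := Classical.not_forall_not.mp hx
      exact ⟨y, fun _ => hxy⟩
  exact Classical.skolem.mp hmove

theorem step_of_terminal {x : V} (σ : V → V) (hx : Γ.Terminal x) : Γ.step σ x = x :=
  if_pos hx

theorem step_of_not_terminal {x : V} (σ : V → V) (hx : ¬ Γ.Terminal x) : Γ.step σ x = σ x :=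
  if_neg hx

theorem iter_succ (Γ : DGGame V ι) (σ : V → V) (n : ℕ) :
    Γ.iter σ (n + 1) = Γ.step σ (Γ.iter σ n) :=
  Function.iterate_succ_apply' _ _ _

theorem iter_add (Γ : DGGame V ι) (σ : V → V) (m n : ℕ) :
    Γ.iter σ (m + n) = (Γ.step σ)^[m] (Γ.iter σ n) :=
  Function.iterate_add_apply _ _ _ _

theorem iter_mem (h0 : Γ.init ∈ X) (hσ : Set.MapsTo σ X X) (n : ℕ) : Γ.iter σ n ∈ X := by
  have hstep : Set.MapsTo (Γ.step σ) X X := fun x hx => by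
    unfold step
    split_ifs
    exacts [hx, hσ hx]
  exact hstep.iterate n h0

theorem terminal_of_outcome_eq_some {t : V} (h : Γ.outcome σ = some t) : Γ.Terminal t := by
  unfold outcome at h
  split_ifs at h with hfin
  exact Option.some.inj h ▸ Nat.find_spec hfin

theorem IsTrap.mapsTo_step (hQ : Γ.IsTrap Q) (hσ : Γ.IsSituation σ) :
    Set.MapsTo (Γ.step σ) Q Q := fun x hx => by
  rw [step_of_not_terminal σ (hQ x hx).1]
  exact (hQ x hx).2 _ (hσ x (hQ x hx).1)

theorem IsTrap.outcome_eq_none (hQ : Γ.IsTrap Q) (hσ : Γ.IsSituation σ) {n : ℕ}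
    (hn : Γ.iter σ n ∈ Q) : Γ.outcome σ = none := by
  refine dif_neg fun ⟨m, hm⟩ => ?_
  -- At time `m + n` the play is both in `Q` and still at the terminal reached at time `m`.
  have hmem : Γ.iter σ (m + n) ∈ Q := by
    rw [iter_add]
    exact (hQ.mapsTo_step hσ).iterate m hn
  have hfix : Γ.iter σ (m + n) = Γ.iter σ m := by
    rw [Nat.add_comm, iter_add]
    exact Function.iterate_fixed (step_of_terminal σ hm) n
  exact (hQ _ hmem).1 (hfix ▸ hm)

theorem IsViable.terminal_restrict_iff (hX : Γ.IsViable X) (h0 : Γ.init ∈ X) {x : X} :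
    (Γ.restrict X h0).Terminal x ↔ Γ.Terminal x := by
  refine ⟨fun hx => ?_, fun hx y => hx y⟩
  by_contra hx'
  obtain ⟨y, hxy, hy⟩ := hX x x.2 hx'
  exact hx ⟨y, hy⟩ hxy

theorem IsViable.terminalGame_restrict (hX : Γ.IsViable X) (h0 : Γ.init ∈ X)
    (hterm : Γ.TerminalGame) : (Γ.restrict X h0).TerminalGame :=
  fun i t ht => hterm i t ((hX.terminal_restrict_iff h0).mp ht)

theorem IsViable.coe_iter_restrict (hX : Γ.IsViable X) (h0 : Γ.init ∈ X)
    (hagree : ∀ x : X, σ x ∈ X → (τ x : V) = σ x) (hstay : ∀ n, Γ.iter σ n ∈ X) (n : ℕ) :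
    ((Γ.restrict X h0).iter τ n : V) = Γ.iter σ n := by
  induction n with
  | zero => rfl
  | succ n ih =>
    have hnext := hstay (n + 1)
    rw [iter_succ, ← ih] at hnext
    rw [iter_succ, iter_succ, ← ih]
    by_cases hx : Γ.Terminal ((Γ.restrict X h0).iter τ n)
    · rw [step_of_terminal σ hx, step_of_terminal τ ((hX.terminal_restrict_iff h0).mpr hx)]
    · rw [step_of_not_terminal σ hx] at hnext ⊢
      rw [step_of_not_terminal τ (mt (hX.terminal_restrict_iff h0).mp hx), hagree _ hnext]

theorem IsViable.map_outcome_restrict (hX : Γ.IsViable X) (h0 : Γ.init ∈ X)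
    (hagree : ∀ x : X, σ x ∈ X → (τ x : V) = σ x) (hstay : ∀ n, Γ.iter σ n ∈ X) :
    ((Γ.restrict X h0).outcome τ).map (↑) = Γ.outcome σ := by
  have hiter := hX.coe_iter_restrict h0 hagree hstay
  simp only [outcome, hX.terminal_restrict_iff h0, hiter]
  split_ifs
  · rw [Option.map_some, hiter]
  · rfl

theorem IsViable.isSituation_extendOutside (hX : Γ.IsViable X) {h0 : Γ.init ∈ X}
    (hτ : (Γ.restrict X h0).IsSituation τ) (hσ : Γ.IsSituation σ) :
    Γ.IsSituation (extendOutside τ σ) := by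
  intro x hx
  by_cases hxX : x ∈ X
  · rw [extendOutside_coe τ σ ⟨x, hxX⟩]
    exact hτ ⟨x, hxX⟩ (mt (hX.terminal_restrict_iff h0).mp hx)
  · rw [extendOutside_of_notMem τ σ hxX]
    exact hσ x hx

theorem IsViable.outcome_extendOutside (hX : Γ.IsViable X) (h0 : Γ.init ∈ X)
    (τ : X → X) (σ : V → V) :
    Γ.outcome (extendOutside τ σ) = ((Γ.restrict X h0).outcome τ).map (↑) := by
  have hmaps : Set.MapsTo (extendOutside τ σ) X X := fun x hx => by
    rw [extendOutside_coe τ σ ⟨x, hx⟩]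
    exact (τ _).2
  exact (hX.map_outcome_restrict h0 (fun x _ => (extendOutside_coe τ σ x).symm)
    (iter_mem h0 hmaps)).symm

theorem IsViable.isSituation_followWithin (hX : Γ.IsViable X) {h0 : Γ.init ∈ X}
    (hσ : Γ.IsSituation σ) (hτ : (Γ.restrict X h0).IsSituation τ) :
    (Γ.restrict X h0).IsSituation (followWithin σ τ) := by
  intro x hx
  by_cases hσx : σ x ∈ X
  · change Γ.adj x (followWithin σ τ x)
    rw [coe_followWithin τ hσx]
    exact hσ x (mt (hX.terminal_restrict_iff h0).mpr hx)
  · rw [followWithin_of_notMem τ hσx]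
    exact hτ x hx

theorem IsViable.map_outcome_followWithin (hX : Γ.IsViable X) (h0 : Γ.init ∈ X) (τ : X → X)
    (hstay : ∀ n, Γ.iter σ n ∈ X) :
    ((Γ.restrict X h0).outcome (followWithin σ τ)).map (↑) = Γ.outcome σ :=
  hX.map_outcome_restrict h0 (fun _ => coe_followWithin τ) hstay

theorem IsViable.not_pref_extendOutside (hX : Γ.IsViable X) {h0 : Γ.init ∈ X}
    (hτ : (Γ.restrict X h0).IsNE τ) {i : ι} {σ' : V → V} (hσ' : Γ.IsSituation σ')
    (hdev : ∀ x, Γ.owner x ≠ i → σ' x = extendOutside τ σ x) (hstay : ∀ n, Γ.iter σ' n ∈ X) :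
    ¬ Γ.pref i (Γ.outcome σ') (Γ.outcome (extendOutside τ σ)) := by
  have hdevX (x : X) (hx : Γ.owner x ≠ i) : followWithin σ' τ x = τ x := by
    have hσx : σ' x = τ x := (hdev x hx).trans (extendOutside_coe τ σ x)
    exact Subtype.ext ((coe_followWithin τ (hσx ▸ (τ x).2)).trans hσx)
  rw [hX.outcome_extendOutside h0, ← hX.map_outcome_followWithin h0 τ hstay]
  exact hτ.2 i _ (hX.isSituation_followWithin hσ' hτ.1) hdevX

theorem IsTrap.isTerminalNE_extendOutside (hQ : Γ.IsTrap Q) (hX : Γ.IsViable Qᶜ)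
    {h0 : Γ.init ∈ Qᶜ} {τ : ↥Qᶜ → ↥Qᶜ}
    (hpref : ∀ i t, Γ.Terminal t → ¬ Γ.pref i none (some t))
    (hτ : (Γ.restrict Qᶜ h0).IsTerminalNE τ) (hσ : Γ.IsSituation σ) :
    Γ.IsTerminalNE (extendOutside τ σ) := by
  obtain ⟨hNE, t, ht⟩ := hτ
  have hout : Γ.outcome (extendOutside τ σ) = some (t : V) := by
    rw [hX.outcome_extendOutside h0, ht, Option.map_some]
  refine ⟨⟨hX.isSituation_extendOutside hNE.1 hσ, fun i σ' hσ' hdev => ?_⟩, t, hout⟩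
  by_cases hvisit : ∃ n, Γ.iter σ' n ∈ Q
  · obtain ⟨n, hn⟩ := hvisit
    rw [hQ.outcome_eq_none hσ' hn, hout]
    exact hpref i t (terminal_of_outcome_eq_some hout)
  · exact hX.not_pref_extendOutside hNE hσ' hdev (not_exists.mp hvisit)

theorem isTrap_noTermReach (Γ : DGGame V ι) : Γ.IsTrap Γ.noTermReach :=
  fun x hx => ⟨fun ht => hx ⟨x, ht, .refl⟩,
    fun _ hxy ⟨t, ht, hyt⟩ => hx ⟨t, ht, .head hxy hyt⟩⟩

theorem isViable_compl_noTermReach (Γ : DGGame V ι) : Γ.IsViable Γ.noTermReachᶜ := by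
  intro x hx hnt
  obtain ⟨t, ht, hxt⟩ := not_not.mp hx
  obtain rfl | ⟨y, hxy, hyt⟩ := Relation.ReflTransGen.cases_head hxt
  · exact absurd ht hnt
  · exact ⟨y, hxy, not_not.mpr ⟨t, ht, hyt⟩⟩

theorem PrefOrder.not_pref_none (hpref : Γ.PrefOrder) (hterm : Γ.TerminalGame) (i : ι) (t : V)
    (ht : Γ.Terminal t) : ¬ Γ.pref i none (some t) := by
  intro h
  have hnone : none ∈ Γ.OutcomeSet := .inl rfl
  have hsome : some t ∈ Γ.OutcomeSet := .inr ⟨t, ht, rfl⟩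
  obtain ⟨hirrefl, htrans, -⟩ := hpref i
  exact hirrefl none hnone (htrans _ hnone _ hsome _ hnone h (hterm i t ht))

end DGGame

theorem stmt5_general {V ι : Type*} (Γ : DGGame V ι)
    (hpref : ∀ i t, Γ.Terminal t → ¬ Γ.pref i none (some t))
    (hterm : Γ.TerminalGame)
    (hreach : ∃ t, Γ.Terminal t ∧ Γ.Reaches Γ.init t) :
    Γ.init ∉ Γ.noTermReach ∧
    (∀ x ∉ Γ.noTermReach, ¬ Γ.Terminal x → ∃ y, Γ.adj x y ∧ y ∉ Γ.noTermReach) ∧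
    ∀ h0 : Γ.init ∈ (Γ.noTermReach)ᶜ,
      (Γ.restrict (Γ.noTermReach)ᶜ h0).TerminalGame ∧
      ((∃ σ, (Γ.restrict (Γ.noTermReach)ᶜ h0).IsTerminalNE σ) →
        ∃ σ : V → V, Γ.IsTerminalNE σ) := by
  have hX := Γ.isViable_compl_noTermReach
  refine ⟨not_not.mpr hreach, hX, fun h0 => ⟨hX.terminalGame_restrict h0 hterm, ?_⟩⟩
  rintro ⟨τ, hτ⟩
  obtain ⟨σ, hσ⟩ := Γ.exists_isSituation
  exact ⟨_, Γ.isTrap_noTermReach.isTerminalNE_extendOutside hX hpref hτ hσ⟩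

/-- Let `Γ` be a terminal DG game in which some terminal is reachable from the initial
position, and let `Q` be the (nonempty) set of positions from which no terminal can be
reached.  Then `v₀ ∉ Q`, the induced subgame `Γ[V∖Q]` is again a terminal DG game
(every non-terminal position of `V∖Q` keeps at least one outgoing move inside `V∖Q`),
and if `Γ[V∖Q]` has a terminal Nash equilibrium then so does `Γ`. -/
theorem stmt5 {V ι : Type*} [Finite V] (Γ : DGGame V ι)
    (hinit : ¬ Γ.Terminal Γ.init) (hpref : Γ.PrefOrder)
    (hterm : Γ.TerminalGame)
    (hreach : ∃ t, Γ.Terminal t ∧ Γ.Reaches Γ.init t)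
    (hQne : (Γ.noTermReach).Nonempty) :
    Γ.init ∉ Γ.noTermReach ∧
    (∀ x ∉ Γ.noTermReach, ¬ Γ.Terminal x → ∃ y, Γ.adj x y ∧ y ∉ Γ.noTermReach) ∧
    ∀ h0 : Γ.init ∈ (Γ.noTermReach)ᶜ,
      (Γ.restrict (Γ.noTermReach)ᶜ h0).TerminalGame ∧
      ((∃ σ, (Γ.restrict (Γ.noTermReach)ᶜ h0).IsTerminalNE σ) →
        ∃ σ : V → V, Γ.IsTerminalNE σ) :=
  stmt5_general Γ (hpref.not_pref_none hterm) hterm hreach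
end
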